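/- Let 0 ≤ α < 1/4, let N be a positive integer, and let x̃_{−N},…,x̃_N be a set of α-perturbed nodes, with w̃_{−N},…,w̃_N the unique quadrature weights exact on T_N at these nodes. Then Σ_{j=−N}^{N} |w̃_j| ≤ 2π/(cos(πα) − sin(πα)). -/

import Mathlib

open Real Finset

/-- `q` is a trigonometric polynomial of degree ≤ N. -/
def IsTrigPoly (N : ℕ) (q : ℝ → ℂ) : Prop :=
  ∃ c : ℤ → ℂ, ∀ x : ℝ,
    q x = ∑ k ∈ Finset.Icc (-(N:ℤ)) (N:ℤ), c k * Complex.exp (Complex.I * (k : ℂ) * (x : ℂ))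

/-- `x` is a set of α-perturbed nodes of size 2N+1. -/
def PerturbedNodes (N : ℕ) (α : ℝ) (x : ℤ → ℝ) : Prop :=
  ∀ j ∈ Finset.Icc (-(N:ℤ)) (N:ℤ),
    |x j - (j : ℝ) * (2*π/(2*N+1))| ≤ α * (2*π/(2*N+1))

/-- The weights `w` form a quadrature rule at the nodes `x` that is exact on `T_N`. -/
def ExactQuad (N : ℕ) (x : ℤ → ℝ) (w : ℤ → ℝ) : Prop :=
  ∀ q : ℝ → ℂ, IsTrigPoly N q →
    ∑ j ∈ Finset.Icc (-(N:ℤ)) (N:ℤ), (w j : ℂ) * q (x j) = ∫ t in (-π)..π, q t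

/-- A Schur multiplier `H k j = ∑ m, f m k * g m j` with `‖f m k‖ ≤ 1` and `‖g m j‖ ≤ A m`
increases the bound of an operator on `ℓ²` by a factor at most `∑ m, A m`. -/
lemma norm_schur_multiplier_le {ι β : Type*} [Fintype ι] {U H : ι → ι → ℂ} {R C : ℝ}
    (hR : 0 ≤ R)
    (hU : ∀ u : ι → ℂ, ‖WithLp.toLp 2 (fun k => ∑ j, U k j * u j)‖ ≤ R * ‖WithLp.toLp 2 u‖)
    {f g : β → ι → ℂ} {A : β → ℝ} (hH : ∀ k j, HasSum (fun m => f m k * g m j) (H k j))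
    (hf : ∀ m k, ‖f m k‖ ≤ 1) (hg : ∀ m j, ‖g m j‖ ≤ A m) (hA : HasSum A C) (u : ι → ℂ) :
    ‖WithLp.toLp 2 (fun k => ∑ j, U k j * H k j * u j)‖ ≤ R * C * ‖WithLp.toLp 2 u‖ := by
  rcases isEmpty_or_nonempty ι with hι | ⟨⟨j₀⟩⟩
  · simp [EuclideanSpace.norm_eq]
  have hA0 : ∀ m, 0 ≤ A m := fun m => (norm_nonneg _).trans (hg m j₀)
  have hsum : HasSum (fun m => WithLp.toLp 2 (fun k => f m k * ∑ j, U k j * (g m j * u j)))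
      (WithLp.toLp 2 (fun k => ∑ j, U k j * H k j * u j)) := by
    refine ((PiLp.continuousLinearEquiv 2 ℂ (fun _ : ι => ℂ)).symm.hasSum (f := fun m k =>
      f m k * ∑ j, U k j * (g m j * u j))).2 ?_
    refine Pi.hasSum.2 fun k => ?_
    refine (hasSum_sum fun j _ => ((hH k j).mul_left (U k j)).mul_right (u j)).congr_fun ?_
    intro m
    rw [Finset.mul_sum]
    exact Finset.sum_congr rfl fun j _ => by ring
  refine hsum.norm_le_of_bounded ((hA.mul_left R).mul_right _) fun m => ?_
  calc ‖WithLp.toLp 2 (fun k => f m k * ∑ j, U k j * (g m j * u j))‖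
      ≤ ‖WithLp.toLp 2 (fun k => ∑ j, U k j * (g m j * u j))‖ := by
        simp only [EuclideanSpace.norm_eq]
        gcongr with k
        rw [norm_mul]
        exact mul_le_of_le_one_left (norm_nonneg _) (hf m k)
    _ ≤ R * ‖WithLp.toLp 2 (fun j => g m j * u j)‖ := hU _
    _ ≤ R * (A m * ‖WithLp.toLp 2 u‖) := by
        gcongr
        rw [← Real.norm_of_nonneg (hA0 m), ← norm_smul]
        simp only [EuclideanSpace.norm_eq]
        gcongr with j
        simp only [norm_mul, PiLp.smul_apply, norm_smul, Real.norm_of_nonneg (hA0 m)]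
        gcongr
        exact hg m j
    _ = R * A m * ‖WithLp.toLp 2 u‖ := by ring

lemma sum_zpow_Icc_eq_zero {ζ : ℂ} {N : ℕ} (h1 : ζ ≠ 1) (hζ : ζ ^ (2 * N + 1) = 1) :
    ∑ k ∈ Finset.Icc (-(N:ℤ)) (N:ℤ), ζ ^ k = 0 := by
  have h0 : ζ ≠ 0 := by
    rintro rfl
    simp at hζ
  have key : ∑ k ∈ Finset.Icc (-(N:ℤ)) (N:ℤ), ζ ^ k =
      ∑ i ∈ Finset.range (2 * N + 1), ζ ^ (-(N:ℤ)) * ζ ^ i := by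
    symm
    refine Finset.sum_bij (fun i _ => (i : ℤ) - N) ?_ ?_ ?_ ?_
    · intro i hi
      simp only [Finset.mem_range, Finset.mem_Icc] at *
      omega
    · intro i _ j _ h
      omega
    · intro k hk
      simp only [Finset.mem_Icc] at hk
      exact ⟨(k + N).toNat, by simp only [Finset.mem_range]; omega, by omega⟩
    · intro i _
      rw [sub_eq_neg_add, zpow_add₀ h0, zpow_natCast]
  rw [key, ← Finset.mul_sum, geom_sum_eq h1, hζ]
  simp

/-- Orthogonality of the equispaced discrete Fourier modes. -/
lemma sum_exp_equispaced (N : ℕ) {l : ℤ} (hl : |l| < 2 * N + 1) :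
    ∑ k ∈ Finset.Icc (-(N:ℤ)) (N:ℤ),
      Complex.exp (Complex.I * k * ((l * (2 * π / (2 * N + 1)) : ℝ) : ℂ)) =
      if l = 0 then 2 * (N : ℂ) + 1 else 0 := by
  have hM : (2 * (N : ℂ) + 1) ≠ 0 := by exact_mod_cast (by omega : 2 * N + 1 ≠ 0)
  split_ifs with h
  · subst h
    simp
    rw [show ((N : ℤ) + 1 + N).toNat = 2 * N + 1 by omega]
    push_cast
    ring
  · rw [← sum_zpow_Icc_eq_zero
      (ζ := Complex.exp (2 * π * Complex.I * (l / (2 * N + 1)))) (N := N)]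
    · refine Finset.sum_congr rfl fun k _ => ?_
      rw [← Complex.exp_int_mul]
      congr 1
      push_cast
      ring
    · rw [Ne, Complex.exp_eq_one_iff]
      rintro ⟨n, hn⟩
      have h2 : (l : ℂ) = n * (2 * N + 1) := by
        have : (2 * π * Complex.I : ℂ) ≠ 0 := Complex.two_pi_I_ne_zero
        rw [mul_comm (n : ℂ)] at hn
        have := mul_left_cancel₀ this hn
        rw [← this]
        field_simp
      have h3 : l = n * (2 * N + 1) := by exact_mod_cast h2
      rcases eq_or_ne n 0 with rfl | hn0
      · simp at h3
        exact h h3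
      · rw [h3, abs_mul, abs_of_nonneg (by positivity : (0:ℤ) ≤ 2 * N + 1)] at hl
        have := Int.one_le_abs hn0
        nlinarith
    · rw [← Complex.exp_nat_mul, Complex.exp_eq_one_iff]
      refine ⟨l, ?_⟩
      push_cast
      field_simp

/-- Parseval's identity for the equispaced discrete Fourier transform. -/
lemma norm_equispaced_dft (N : ℕ) (u : Finset.Icc (-(N:ℤ)) (N:ℤ) → ℂ) :
    ‖WithLp.toLp 2 (fun k : Finset.Icc (-(N:ℤ)) (N:ℤ) => ∑ j : Finset.Icc (-(N:ℤ)) (N:ℤ),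
      Complex.exp (Complex.I * ((k : ℤ) : ℂ) * (((j : ℤ) * (2 * π / (2 * N + 1)) : ℝ) : ℂ)) * u j)‖
      = √(2 * N + 1) * ‖WithLp.toLp 2 u‖ := by
  rw [EuclideanSpace.norm_eq, EuclideanSpace.norm_eq, ← Real.sqrt_mul (by positivity)]
  congr 1
  apply Complex.ofReal_injective
  push_cast
  simp_rw [← Complex.mul_conj', map_sum, map_mul, ← Complex.exp_conj, Finset.sum_mul_sum,
    Finset.mul_sum]
  rw [Finset.sum_comm]
  refine Finset.sum_congr rfl fun j _ => ?_
  rw [Finset.sum_comm]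
  have : ∀ i : Finset.Icc (-(N:ℤ)) (N:ℤ), ∑ k : Finset.Icc (-(N:ℤ)) (N:ℤ),
      Complex.exp (Complex.I * ((k : ℤ) : ℂ) * (((j : ℤ) * (2 * π / (2 * N + 1)) : ℝ) : ℂ)) * u j *
      (Complex.exp ((starRingEnd ℂ) (Complex.I * ((k : ℤ) : ℂ) *
        (((i : ℤ) * (2 * π / (2 * N + 1)) : ℝ) : ℂ))) * (starRingEnd ℂ) (u i)) =
      if j = i then (2 * N + 1) * (u j * (starRingEnd ℂ) (u j)) else 0 := by
    intro i
    have hj := Finset.mem_Icc.1 j.2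
    have hi := Finset.mem_Icc.1 i.2
    have h := sum_exp_equispaced N (l := j - i) (by rw [abs_lt]; constructor <;> omega)
    rw [← Finset.sum_coe_sort] at h
    calc _ = (∑ k : Finset.Icc (-(N:ℤ)) (N:ℤ), Complex.exp (Complex.I * ((k : ℤ) : ℂ) *
          ((((j : ℤ) - (i : ℤ) : ℤ) * (2 * π / (2 * N + 1)) : ℝ) : ℂ))) *
          (u j * (starRingEnd ℂ) (u i)) := by
          rw [Finset.sum_mul]
          refine Finset.sum_congr rfl fun k _ => ?_
          rw [mul_mul_mul_comm, ← Complex.exp_add]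
          congr 2
          simp only [map_mul, Complex.conj_I, Complex.conj_ofReal, map_intCast]
          push_cast
          ring
      _ = _ := by
          rw [h]
          by_cases hij : j = i
          · simp [hij]
          · rw [if_neg hij, if_neg (by rwa [sub_eq_zero, Subtype.coe_inj]), zero_mul]
  push_cast at this
  simp only [this]
  simp

lemma integral_exp_I_mul_eq_sinc (s : ℝ) :
    ∫ t in (-π)..π, Complex.exp (Complex.I * s * t) = 2 * π * (sinc (π * s) : ℝ) := by
  rcases eq_or_ne s 0 with rfl | hs
  · simp
    ring
  · have h := integral_exp_mul_I_eq_sinc (π * s)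
    have h2 := intervalIntegral.smul_integral_comp_mul_left (a := -π) (b := π)
      (fun t : ℝ => Complex.exp (t * Complex.I)) s
    rw [show s * -π = -(π * s) by ring, show s * π = π * s by ring, h] at h2
    have hs' : (s : ℂ) ≠ 0 := by exact_mod_cast hs
    apply mul_left_cancel₀ hs'
    rw [Complex.real_smul] at h2
    calc _ = (s : ℂ) * ∫ t in (-π)..π, Complex.exp (((s * t : ℝ) : ℂ) * Complex.I) := by
          congr 2
          ext t
          congr 1
          push_cast
          ring
      _ = _ := by
          rw [h2]
          push_cast
          ring

/-- Pointwise convergence of the Fourier series on `[-π, π)` under summability. -/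
lemma hasSum_fourier_of_summable {f : ℝ → ℂ} {c : ℤ → ℂ} (hf : Continuous f)
    (hper : f (-π) = f π)
    (hc : ∀ n : ℤ, ∫ t in (-π)..π, Complex.exp (-(Complex.I * n * t)) * f t = 2 * π * c n)
    (hs : Summable c) {t : ℝ} (ht : t ∈ Set.Icc (-π) π) :
    HasSum (fun n : ℤ => Complex.exp (Complex.I * n * t) * c n) (f t) := by
  have : Fact (0 < 2 * π) := ⟨by positivity⟩
  have hend : -π + 2 * π = π := by ring
  let F : C(AddCircle (2 * π), ℂ) := ⟨AddCircle.liftIco (2 * π) (-π) f,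
    AddCircle.liftIco_continuous (by rw [hend, hper]) hf.continuousOn⟩
  have hπ : (π : ℂ) ≠ 0 := by exact_mod_cast pi_ne_zero
  have hexp : ∀ (n : ℤ) (x : ℝ), fourier n (x : AddCircle (2 * π)) =
      Complex.exp (Complex.I * n * x) := by
    intro n x
    rw [fourier_coe_apply]
    congr 1
    push_cast
    field_simp
  have hcoeff : fourierCoeff F = c := by
    ext n
    rw [fourierCoeff_eq_intervalIntegral _ _ (-π), hend]
    have : ∫ x in (-π)..π, fourier (-n) (x : AddCircle (2 * π)) • F x =
        ∫ t in (-π)..π, Complex.exp (-(Complex.I * n * t)) * f t := by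
      refine intervalIntegral.integral_congr_Ioo_of_le (by linarith [pi_pos]) fun x hx => ?_
      have hx' : F x = f x := AddCircle.liftIco_coe_apply
        (Set.Ioo_subset_Ico_self (by rwa [hend]))
      simp only [hx', hexp, smul_eq_mul]
      congr 2
      push_cast
      ring
    rw [this, hc, Complex.real_smul]
    push_cast
    field_simp
  have hmain := has_pointwise_sum_fourier_series_of_summable (f := F) (by rwa [hcoeff])
    (t : AddCircle (2 * π))
  have hFt : F t = f t := by
    rcases eq_or_lt_of_le ht.2 with rfl | h
    · have h1 : ((π : ℝ) : AddCircle (2 * π)) = ((-π : ℝ) : AddCircle (2 * π)) := by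
        rw [← AddCircle.coe_add_period (2 * π) (-π), hend]
      rw [h1, ← hper]
      exact AddCircle.liftIco_coe_apply ⟨le_rfl, by linarith [pi_pos]⟩
    · exact AddCircle.liftIco_coe_apply ⟨ht.1, by rwa [hend]⟩
  rw [hFt] at hmain
  refine hmain.congr_fun fun n => ?_
  rw [hcoeff, hexp, smul_eq_mul, mul_comm]

/-- Fourier series of a combination of two exponentials that agrees at `±π`. -/
lemma hasSum_fourier_two_exp {a b ε : ℝ}
    (hper : Complex.exp (Complex.I * a * (-π)) + ε * Complex.exp (Complex.I * b * (-π)) =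
      Complex.exp (Complex.I * a * π) + ε * Complex.exp (Complex.I * b * π))
    (hs : Summable fun n : ℤ => (sinc (π * (a - n)) + ε * sinc (π * (b - n))) / 2)
    {t : ℝ} (ht : t ∈ Set.Icc (-π) π) :
    HasSum (fun n : ℤ => Complex.exp (Complex.I * n * t) *
        (((sinc (π * (a - n)) + ε * sinc (π * (b - n))) / 2 : ℝ) : ℂ))
      ((Complex.exp (Complex.I * a * t) + ε * Complex.exp (Complex.I * b * t)) / 2) := by
  refine hasSum_fourier_of_summable (f := fun t : ℝ =>
    (Complex.exp (Complex.I * a * t) + ε * Complex.exp (Complex.I * b * t)) / 2)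
    (by fun_prop) ?_ ?_ (Complex.hasSum_ofReal.2 hs.hasSum).summable ht
  · simp only [Complex.ofReal_neg, hper]
  · intro n
    have h1 : ∀ t : ℝ, Complex.exp (-(Complex.I * n * t)) *
        ((Complex.exp (Complex.I * a * t) + ε * Complex.exp (Complex.I * b * t)) / 2) =
        (1 / 2 : ℂ) * Complex.exp (Complex.I * ((a - n : ℝ) : ℂ) * t) +
        (ε / 2 : ℂ) * Complex.exp (Complex.I * ((b - n : ℝ) : ℂ) * t) := by
      intro t
      have e : ∀ r : ℝ, Complex.exp (Complex.I * ((r - n : ℝ) : ℂ) * t) =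
          Complex.exp (-(Complex.I * n * t)) * Complex.exp (Complex.I * r * t) := by
        intro r
        rw [← Complex.exp_add]
        congr 1
        push_cast
        ring
      rw [e, e]
      ring
    simp only [h1]
    rw [intervalIntegral.integral_add (Continuous.intervalIntegrable (by fun_prop) _ _)
      (Continuous.intervalIntegrable (by fun_prop) _ _), intervalIntegral.integral_const_mul,
      intervalIntegral.integral_const_mul, integral_exp_I_mul_eq_sinc, integral_exp_I_mul_eq_sinc]
    push_cast
    ring

/-- Fourier coefficients of `t ↦ cos (δ t)` on `[-π, π]`. -/
noncomputable def cosCoeff (δ : ℝ) (n : ℤ) : ℝ :=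
  (sinc (π * (δ - n)) + (1 : ℝ) * sinc (π * (-δ - n))) / 2

/-- Fourier coefficients of `t ↦ I * exp (I t / 2) * sin (δ t)` on `[-π, π]`. -/
noncomputable def sinCoeff (δ : ℝ) (n : ℤ) : ℝ :=
  (sinc (π * (δ + 1 / 2 - n)) + (-1 : ℝ) * sinc (π * (-δ + 1 / 2 - n))) / 2

lemma one_le_sq_of_int_ne_zero {n : ℤ} (hn : n ≠ 0) : (1 : ℝ) ≤ (n : ℝ) ^ 2 := by
  have h : 0 < n ^ 2 := by positivity
  exact_mod_cast Int.add_one_le_iff.2 h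

lemma one_fourth_le_sq_half_sub_int (n : ℤ) : (1 / 4 : ℝ) ≤ (1 / 2 - n : ℝ) ^ 2 := by
  have h : (0 : ℤ) ≤ n * (n - 1) := by
    rcases le_or_gt n 0 with h | h
    · nlinarith
    · nlinarith [Int.add_one_le_iff.2 h]
  have h' : (0 : ℝ) ≤ n * (n - 1) := by exact_mod_cast h
  nlinarith

lemma cosCoeff_zero (δ : ℝ) : cosCoeff δ 0 = sinc (π * δ) := by
  simp only [cosCoeff, Int.cast_zero, sub_zero, mul_neg, sinc_neg]
  ring

lemma cosCoeff_of_ne_zero {δ : ℝ} (hδ : |δ| < 1 / 4) {n : ℤ} (hn : n ≠ 0) :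
    cosCoeff δ n = -((-1) ^ n * (δ * sin (π * δ) / (π * ((n : ℝ) ^ 2 - δ ^ 2)))) := by
  obtain ⟨h1, h2⟩ := abs_lt.1 hδ
  have hn1 := one_le_sq_of_int_ne_zero hn
  have hne : (n : ℝ) ^ 2 - δ ^ 2 ≠ 0 := by nlinarith
  have ha : δ - n ≠ 0 := fun h => hne (by linear_combination -(δ + n) * h)
  have hb : -δ - n ≠ 0 := fun h => hne (by linear_combination (δ - n) * h)
  have hc : (n : ℝ) ^ 2 - δ ^ 2 = (δ - n) * (-δ - n) := by ring
  rw [cosCoeff, sinc_of_ne_zero (mul_ne_zero pi_ne_zero ha),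
    sinc_of_ne_zero (mul_ne_zero pi_ne_zero hb),
    show π * (δ - n) = π * δ - n * π by ring, show π * (-δ - n) = -(π * δ) - n * π by ring,
    sin_sub_int_mul_pi, sin_sub_int_mul_pi, sin_neg,
    show π * δ - n * π = π * (δ - n) by ring, show -(π * δ) - n * π = π * (-δ - n) by ring, hc]
  have := pi_ne_zero
  field_simp
  ring

lemma sinCoeff_eq {δ : ℝ} (hδ : |δ| < 1 / 4) (n : ℤ) :
    sinCoeff δ n = -((-1) ^ n * (δ * cos (π * δ) / (π * ((1 / 2 - n : ℝ) ^ 2 - δ ^ 2)))) := by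
  obtain ⟨h1, h2⟩ := abs_lt.1 hδ
  have hn1 := one_fourth_le_sq_half_sub_int n
  have hne : (1 / 2 - n : ℝ) ^ 2 - δ ^ 2 ≠ 0 := by nlinarith
  have ha : δ + 1 / 2 - n ≠ 0 := fun h => hne (by linear_combination (-δ + 1 / 2 - n) * h)
  have hb : -δ + 1 / 2 - n ≠ 0 := fun h => hne (by linear_combination (δ + 1 / 2 - n) * h)
  have hc : (1 / 2 - n : ℝ) ^ 2 - δ ^ 2 = (δ + 1 / 2 - n) * (-δ + 1 / 2 - n) := by ring
  have e1 : π * (δ + 1 / 2 - n) = (π * δ + π / 2) - n * π := by ring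
  have e2 : π * (-δ + 1 / 2 - n) = (-(π * δ) + π / 2) - n * π := by ring
  have s1 : sin (π * (δ + 1 / 2 - n)) = (-1) ^ n * cos (π * δ) := by
    rw [e1, sin_sub_int_mul_pi, sin_add_pi_div_two]
  have s2 : sin (π * (-δ + 1 / 2 - n)) = (-1) ^ n * cos (π * δ) := by
    rw [e2, sin_sub_int_mul_pi, sin_add_pi_div_two, cos_neg]
  rw [sinCoeff, sinc_of_ne_zero (mul_ne_zero pi_ne_zero ha),
    sinc_of_ne_zero (mul_ne_zero pi_ne_zero hb), s1, s2, hc]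
  have key : δ + 1 / 2 - n - (-δ + 1 / 2 - n) = 2 * δ := by ring
  generalize δ + 1 / 2 - (n : ℝ) = a at *
  generalize -δ + 1 / 2 - (n : ℝ) = b at *
  have := pi_ne_zero
  field_simp
  linear_combination -cos (π * δ) * key

lemma summable_of_abs_le_one_div_sq {c : ℤ → ℝ} (h : ∀ n : ℤ, n ≠ 0 → |c n| ≤ 1 / (n : ℝ) ^ 2) :
    Summable c := by
  refine Summable.of_norm_bounded_eventually
    (summable_one_div_int_pow.2 (by norm_num : 1 < 2)) ?_
  filter_upwards [(Set.finite_singleton (0 : ℤ)).compl_mem_cofinite] with n hn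
  exact h n hn

lemma summable_cosCoeff {δ : ℝ} (hδ : |δ| < 1 / 4) : Summable (cosCoeff δ) := by
  refine summable_of_abs_le_one_div_sq fun n hn => ?_
  have hn1 := one_le_sq_of_int_ne_zero hn
  have hδ2 : δ ^ 2 < 1 / 16 := by nlinarith [sq_abs δ, abs_nonneg δ]
  have hpos : 0 < (n : ℝ) ^ 2 - δ ^ 2 := by linarith
  rw [cosCoeff_of_ne_zero hδ hn, abs_neg, abs_mul, abs_zpow, abs_neg, abs_one, one_zpow, one_mul,
    abs_div, abs_mul, abs_of_pos (mul_pos pi_pos hpos), div_le_div_iff₀ (by positivity)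
    (by positivity)]
  have h1 : |δ| * |sin (π * δ)| ≤ 1 / 4 * 1 := by
    gcongr
    exact abs_sin_le_one _
  nlinarith [pi_gt_three]

lemma summable_sinCoeff {δ : ℝ} (hδ : |δ| < 1 / 4) : Summable (sinCoeff δ) := by
  refine summable_of_abs_le_one_div_sq fun n hn => ?_
  have hn1 := one_le_sq_of_int_ne_zero hn
  have hδ2 : δ ^ 2 < 1 / 16 := by nlinarith [sq_abs δ, abs_nonneg δ]
  have hs := one_fourth_le_sq_half_sub_int n
  have hs2 : (n : ℝ) ^ 2 ≤ 4 * (1 / 2 - n : ℝ) ^ 2 := by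
    have h : (0 : ℤ) ≤ (n - 1) * (3 * n - 1) := by
      rcases le_or_gt n 0 with h | h
      · nlinarith
      · exact mul_nonneg (by omega) (by omega)
    have h' : (0 : ℝ) ≤ (n - 1) * (3 * n - 1) := by exact_mod_cast h
    nlinarith
  have hpos : 0 < (1 / 2 - n : ℝ) ^ 2 - δ ^ 2 := by linarith
  rw [sinCoeff_eq hδ, abs_neg, abs_mul, abs_zpow, abs_neg, abs_one, one_zpow, one_mul,
    abs_div, abs_mul, abs_of_pos (mul_pos pi_pos hpos), div_le_div_iff₀ (by positivity)
    (by positivity)]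
  have h1 : |δ| * |cos (π * δ)| ≤ 1 / 4 * 1 := by
    gcongr
    exact abs_cos_le_one _
  nlinarith [pi_gt_three]

lemma hasSum_cosCoeff {δ : ℝ} (hδ : |δ| < 1 / 4) {t : ℝ} (ht : t ∈ Set.Icc (-π) π) :
    HasSum (fun n : ℤ => Complex.exp (Complex.I * n * t) * (cosCoeff δ n : ℂ))
      (cos (δ * t) : ℂ) := by
  have hs := summable_cosCoeff hδ
  unfold cosCoeff at hs ⊢
  convert hasSum_fourier_two_exp ?_ hs ht using 1
  · push_cast
    rw [Complex.cos]
    rw [one_mul]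
    congr 3 <;> ring
  · push_cast
    rw [one_mul, one_mul, add_comm]
    congr 2 <;> ring

lemma hasSum_sinCoeff {δ : ℝ} (hδ : |δ| < 1 / 4) {t : ℝ} (ht : t ∈ Set.Icc (-π) π) :
    HasSum (fun n : ℤ => Complex.exp (Complex.I * n * t) * (sinCoeff δ n : ℂ))
      (Complex.exp (t / 2 * Complex.I) * (Complex.I * sin (δ * t))) := by
  have hs := summable_sinCoeff hδ
  unfold sinCoeff at hs ⊢
  have key : ∀ t : ℝ, (Complex.exp (Complex.I * ((δ + 1 / 2 : ℝ) : ℂ) * t) +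
      ((-1 : ℝ) : ℂ) * Complex.exp (Complex.I * ((-δ + 1 / 2 : ℝ) : ℂ) * t)) / 2 =
      Complex.exp (t / 2 * Complex.I) * (Complex.I * sin (δ * t)) := by
    intro t
    have e1 : Complex.I * ((δ + 1 / 2 : ℝ) : ℂ) * t = t / 2 * Complex.I + δ * t * Complex.I := by
      push_cast; ring
    have e2 : Complex.I * ((-δ + 1 / 2 : ℝ) : ℂ) * t =
        t / 2 * Complex.I + -(δ * t) * Complex.I := by
      push_cast; ring
    rw [e1, e2, Complex.exp_add, Complex.exp_add]
    push_cast
    rw [Complex.sin]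
    linear_combination -(1 / 2) * Complex.exp (t / 2 * Complex.I) *
      (Complex.exp (-(δ * t) * Complex.I) - Complex.exp (δ * t * Complex.I)) * Complex.I_mul_I
  rw [← key]
  refine hasSum_fourier_two_exp ?_ hs ht
  have h1 := key (-π)
  have h2 := key π
  have h3 : Complex.exp (((-π : ℝ) : ℂ) / 2 * Complex.I) * (Complex.I * sin (δ * -π)) =
      Complex.exp ((π : ℂ) / 2 * Complex.I) * (Complex.I * sin (δ * π)) := by
    rw [show (((-π : ℝ) : ℂ) / 2 * Complex.I) = -(π / 2 * Complex.I) by push_cast; ring,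
      Complex.exp_neg, Complex.exp_pi_div_two_mul_I, mul_neg, sin_neg]
    simp
  rw [h3, ← h2] at h1
  push_cast at h1 ⊢
  linear_combination 2 * h1

lemma mul_cos_le_mul_cos {x y : ℝ} (hx : 0 ≤ x) (hxy : x ≤ y) (hy : y ≤ π / 4) :
    x * cos x ≤ y * cos y := by
  have hmono : MonotoneOn (fun x => x * cos x) (Set.Icc 0 (π / 4)) := by
    refine monotoneOn_of_deriv_nonneg (convex_Icc _ _) (by fun_prop) (by fun_prop) fun z hz => ?_
    rw [interior_Icc] at hz
    have hd : HasDerivAt (fun x => x * cos x) (1 * cos z + z * -sin z) z :=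
      (hasDerivAt_id z).mul (hasDerivAt_cos z)
    rw [hd.deriv]
    have h1 : sin z ≤ cos z := by
      rw [← cos_pi_div_two_sub]
      exact cos_le_cos_of_nonneg_of_le_pi hz.1.le (by linarith [hz.1, pi_pos])
        (by linarith [hz.2])
    have h0 : 0 ≤ sin z := sin_nonneg_of_nonneg_of_le_pi hz.1.le (by linarith [hz.2, pi_pos])
    nlinarith [hz.1, hz.2, pi_lt_four]
  exact hmono ⟨hx, hxy.trans hy⟩ ⟨hx.trans hxy, hy⟩ hxy

lemma sinc_anti {x y : ℝ} (hx : 0 ≤ x) (hxy : x ≤ y) (hy : y ≤ π) : sinc y ≤ sinc x := by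
  rcases hx.eq_or_lt with rfl | hx0
  · simpa using sinc_le_one y
  have hy0 := hx0.trans_le hxy
  rw [sinc_of_ne_zero hx0.ne', sinc_of_ne_zero hy0.ne', div_le_div_iff₀ hy0 hx0]
  have h := strictConcaveOn_sin_Icc.concaveOn.2 (⟨le_rfl, pi_pos.le⟩ : (0 : ℝ) ∈ Set.Icc 0 π)
    ⟨hy0.le, hy⟩ (sub_nonneg.2 ((div_le_one hy0).2 hxy)) (div_nonneg hx hy0.le)
    (sub_add_cancel 1 (x / y))
  simp only [smul_eq_mul, sin_zero, mul_zero, zero_add, div_mul_cancel₀ x hy0.ne'] at h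
  rw [div_mul_eq_mul_div, div_le_iff₀ hy0] at h
  linarith

lemma abs_one_sub_cosCoeff_le {α δ : ℝ} (hα : α < 1 / 4) (hδ : |δ| ≤ α) (n : ℤ) :
    |(if n = 0 then 1 else 0) - cosCoeff δ n| ≤
      (-1) ^ n * ((if n = 0 then 1 else 0) - cosCoeff α n) := by
  have hα0 : 0 ≤ α := (abs_nonneg δ).trans hδ
  have hα' : |α| < 1 / 4 := by rwa [abs_of_nonneg hα0]
  have hπα : π * α ≤ π / 4 := by nlinarith [pi_pos]
  have hπδ : π * |δ| ≤ π * α := by nlinarith [pi_pos]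
  rcases eq_or_ne n 0 with rfl | hn
  · have habs : sinc (π * δ) = sinc (π * |δ|) := by
      rcases abs_choice δ with h | h <;> rw [h]
      rw [mul_neg, sinc_neg]
    simp only [if_true, cosCoeff_zero, zpow_zero, one_mul]
    rw [abs_of_nonneg (by linarith [sinc_le_one (π * δ)]), habs]
    have := sinc_anti (mul_nonneg pi_pos.le (abs_nonneg δ)) hπδ (by linarith [pi_pos])
    linarith
  · have hn1 := one_le_sq_of_int_ne_zero hn
    have hδα : δ ^ 2 ≤ α ^ 2 := sq_le_sq' (by linarith [neg_abs_le δ]) (by linarith [le_abs_self δ])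
    have hpos : 0 < (n : ℝ) ^ 2 - α ^ 2 := by nlinarith
    have hpos' : 0 < (n : ℝ) ^ 2 - δ ^ 2 := by linarith
    have hsq : ((-1 : ℝ) ^ n) * (-1) ^ n = 1 := by
      rw [← mul_zpow]; simp
    simp only [if_neg hn, zero_sub, cosCoeff_of_ne_zero hα' hn,
      cosCoeff_of_ne_zero (hδ.trans_lt hα) hn, neg_neg]
    rw [← mul_assoc, hsq, one_mul, abs_mul, abs_zpow, abs_neg, abs_one, one_zpow, one_mul,
      abs_div, abs_of_pos (mul_pos pi_pos hpos'), abs_mul]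
    have hsin : |sin (π * δ)| ≤ sin (π * α) := by
      rw [abs_sin_eq_sin_abs_of_abs_le_pi, abs_mul, abs_of_pos pi_pos]
      · exact sin_le_sin_of_le_of_le_pi_div_two
          (by nlinarith [pi_pos, abs_nonneg δ]) (by linarith [pi_pos]) hπδ
      · rw [abs_mul, abs_of_pos pi_pos]
        linarith [pi_pos]
    have hsin0 := (abs_nonneg _).trans hsin
    have := pi_pos
    gcongr

lemma abs_sinCoeff_le {α δ : ℝ} (hα : α < 1 / 4) (hδ : |δ| ≤ α) (n : ℤ) :
    |sinCoeff δ n| ≤ -((-1) ^ n * sinCoeff α n) := by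
  have hα0 : 0 ≤ α := (abs_nonneg δ).trans hδ
  have hα' : |α| < 1 / 4 := by rwa [abs_of_nonneg hα0]
  have hπα : π * α ≤ π / 4 := by nlinarith [pi_pos]
  have hπδ : π * |δ| ≤ π * α := by nlinarith [pi_pos]
  have hn1 := one_fourth_le_sq_half_sub_int n
  have hδα : δ ^ 2 ≤ α ^ 2 := sq_le_sq' (by linarith [neg_abs_le δ]) (by linarith [le_abs_self δ])
  have hpos : 0 < (1 / 2 - n : ℝ) ^ 2 - α ^ 2 := by nlinarith
  have hpos' : 0 < (1 / 2 - n : ℝ) ^ 2 - δ ^ 2 := by linarith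
  have hsq : ((-1 : ℝ) ^ n) * (-1) ^ n = 1 := by
    rw [← mul_zpow]; simp
  rw [sinCoeff_eq hα', sinCoeff_eq (hδ.trans_lt hα), mul_neg, neg_neg, ← mul_assoc, hsq, one_mul,
    abs_neg, abs_mul, abs_zpow, abs_neg, abs_one, one_zpow, one_mul, abs_div,
    abs_of_pos (mul_pos pi_pos hpos')]
  have hcos : |δ * cos (π * δ)| ≤ α * cos (π * α) := by
    have h1 : cos (π * δ) = cos (π * |δ|) := by
      rw [← cos_abs, abs_mul, abs_of_pos pi_pos]
    have h2 : 0 ≤ cos (π * |δ|) := cos_nonneg_of_neg_pi_div_two_le_of_le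
      (by nlinarith [pi_pos, abs_nonneg δ]) (by linarith [pi_pos])
    rw [h1, abs_mul, abs_of_nonneg h2]
    have := mul_cos_le_mul_cos (mul_nonneg pi_pos.le (abs_nonneg δ)) hπδ hπα
    rw [mul_assoc, mul_assoc] at this
    exact le_of_mul_le_mul_left this pi_pos
  have hcos0 := (abs_nonneg _).trans hcos
  have := pi_pos
  gcongr

lemma exp_I_mul_int_mul_pi (n : ℤ) : Complex.exp (Complex.I * n * π) = (-1) ^ n := by
  rw [show Complex.I * n * π = n * (π * Complex.I) by ring, Complex.exp_int_mul,
    Complex.exp_pi_mul_I]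

lemma hasSum_one_sub_cosCoeff {δ : ℝ} (hδ : |δ| < 1 / 4) {t : ℝ} (ht : t ∈ Set.Icc (-π) π) :
    HasSum (fun n : ℤ => Complex.exp (Complex.I * n * t) *
      (((if n = 0 then 1 else 0) - cosCoeff δ n : ℝ) : ℂ)) (1 - cos (δ * t) : ℂ) := by
  have h0 : HasSum (fun n : ℤ => if n = 0 then (1 : ℂ) else 0) 1 := hasSum_ite_eq 0 1
  refine (h0.sub (hasSum_cosCoeff hδ ht)).congr_fun fun n => ?_
  rcases eq_or_ne n 0 with rfl | hn
  · simp
  · simp [hn]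

lemma hasSum_one_sub_cosCoeff_pi {α : ℝ} (hα : |α| < 1 / 4) :
    HasSum (fun n : ℤ => (-1 : ℝ) ^ n * ((if n = 0 then 1 else 0) - cosCoeff α n))
      (1 - cos (π * α)) := by
  have h := hasSum_one_sub_cosCoeff hα (t := π) ⟨by linarith [pi_pos], le_rfl⟩
  simp only [exp_I_mul_int_mul_pi] at h
  rw [← Complex.hasSum_ofReal]
  convert h using 1
  · ext n
    push_cast
    ring
  · push_cast
    rw [mul_comm]

lemma hasSum_sinCoeff_pi {α : ℝ} (hα : |α| < 1 / 4) :
    HasSum (fun n : ℤ => -((-1 : ℝ) ^ n * sinCoeff α n)) (sin (π * α)) := by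
  have h := (hasSum_sinCoeff hα (t := π) ⟨by linarith [pi_pos], le_rfl⟩).neg
  simp only [exp_I_mul_int_mul_pi, Complex.exp_pi_div_two_mul_I] at h
  rw [← Complex.hasSum_ofReal]
  have hval : -(Complex.I * (Complex.I * (sin (α * π) : ℂ))) = (sin (π * α) : ℝ) := by
    rw [← mul_assoc, Complex.I_mul_I, mul_comm α]
    push_cast
    ring
  rw [← hval]
  refine h.congr_fun fun n => ?_
  push_cast
  ring

/-- bound on the absolute sum of quadrature weights at α-perturbed nodes
for α < 1/4. -/
theorem abs_sum_weights_bounded (α : ℝ) (hα0 : 0 ≤ α) (hα : α < 1/4) (N : ℕ) (hN : 0 < N)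
    (x : ℤ → ℝ) (hx : PerturbedNodes N α x)
    (w : ℤ → ℝ) (hw : ExactQuad N x w) :
    ∑ j ∈ Finset.Icc (-(N:ℤ)) (N:ℤ), |w j| ≤
      2*π / (Real.cos (π*α) - Real.sin (π*α)) := by
  have hMpos : (0 : ℝ) < 2 * N + 1 := by positivity
  have hh : 0 < 2 * π / (2 * N + 1) := by positivity
  set δ : ℤ → ℝ := fun j => x j / (2 * π / (2 * N + 1)) - j with hδdef
  have hδ : ∀ j : Finset.Icc (-(N:ℤ)) (N:ℤ), |δ j| ≤ α := by
    intro j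
    have h1 : δ j = (x j - (j : ℤ) * (2 * π / (2 * N + 1))) / (2 * π / (2 * N + 1)) := by
      simp only [hδdef]
      field_simp
    rw [h1, abs_div, abs_of_pos hh, div_le_iff₀ hh]
    exact hx j j.2
  have hxδ : ∀ j : ℤ, x j = (j + δ j) * (2 * π / (2 * N + 1)) := by
    intro j
    simp only [hδdef]
    field_simp
    ring
  have ht : ∀ k : Finset.Icc (-(N:ℤ)) (N:ℤ), (k : ℤ) * (2 * π / (2 * N + 1)) ∈ Set.Icc (-π) π := by
    intro k
    obtain ⟨h1, h2⟩ := Finset.mem_Icc.1 k.2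
    have h1' : -(N : ℝ) ≤ (k : ℤ) := by exact_mod_cast h1
    have h2' : ((k : ℤ) : ℝ) ≤ N := by exact_mod_cast h2
    rw [← mul_div_assoc, Set.mem_Icc, le_div_iff₀ hMpos, div_le_iff₀ hMpos]
    constructor <;> nlinarith [pi_pos]
  set U : Finset.Icc (-(N:ℤ)) (N:ℤ) → Finset.Icc (-(N:ℤ)) (N:ℤ) → ℂ := fun k j =>
    Complex.exp (Complex.I * ((k : ℤ) : ℂ) * (((j : ℤ) * (2 * π / (2 * N + 1)) : ℝ) : ℂ)) with hUdef
  set t : Finset.Icc (-(N:ℤ)) (N:ℤ) → ℝ := fun k => (k : ℤ) * (2 * π / (2 * N + 1)) with htdef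
  set u : Finset.Icc (-(N:ℤ)) (N:ℤ) → ℂ := fun j => (w j : ℂ) with hudef
  set R : ℝ := √(2 * N + 1) with hR
  have hα' : |α| < 1 / 4 := by rwa [abs_of_nonneg hα0]
  have hU : ∀ v : Finset.Icc (-(N:ℤ)) (N:ℤ) → ℂ,
      ‖WithLp.toLp 2 (fun k => ∑ j, U k j * v j)‖ ≤ R * ‖WithLp.toLp 2 v‖ :=
    fun v => (norm_equispaced_dft N v).le
  have hcos := norm_schur_multiplier_le (Real.sqrt_nonneg _) hU
    (f := fun (m : ℤ) k => Complex.exp (Complex.I * m * t k))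
    (g := fun m j => (((if m = 0 then 1 else 0) - cosCoeff (δ j) m : ℝ) : ℂ))
    (fun k j => hasSum_one_sub_cosCoeff ((hδ j).trans_lt hα) (ht k))
    (fun m k => by simp [Complex.norm_exp])
    (fun m j => by
      rw [Complex.norm_real, Real.norm_eq_abs]
      exact abs_one_sub_cosCoeff_le hα (hδ j) m)
    (hasSum_one_sub_cosCoeff_pi hα') u
  have hsin := norm_schur_multiplier_le (ι := Finset.Icc (-(N:ℤ)) (N:ℤ)) (Real.sqrt_nonneg _) hU
    (H := fun k j => -(Complex.I * (sin (δ j * t k) : ℂ)))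
    (f := fun (m : ℤ) k => -Complex.exp (-(t k / 2 * Complex.I)) *
      Complex.exp (Complex.I * m * t k))
    (g := fun m j => (sinCoeff (δ j) m : ℂ))
    (fun k j => by
      have h := (hasSum_sinCoeff ((hδ j).trans_lt hα) (ht k)).mul_left
        (-Complex.exp (-(t k / 2 * Complex.I)))
      rw [← mul_assoc, neg_mul, ← Complex.exp_add, neg_add_cancel, Complex.exp_zero,
        neg_one_mul] at h
      exact h.congr_fun fun m => mul_assoc _ _ _)
    (fun m k => by simp [Complex.norm_exp])
    (fun m j => by
      rw [Complex.norm_real, Real.norm_eq_abs]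
      exact abs_sinCoeff_le hα (hδ j) m)
    (hasSum_sinCoeff_pi hα') u
  have hexact : ∀ k : Finset.Icc (-(N:ℤ)) (N:ℤ),
      ∑ j, U k j * Complex.exp (δ j * t k * Complex.I) * u j =
        if (k : ℤ) = 0 then 2 * (π : ℂ) else 0 := by
    intro k
    have h := hw (fun y => Complex.exp (Complex.I * ((k : ℤ) : ℂ) * y))
      ⟨Pi.single (k : ℤ) 1, fun y => by
        rw [Finset.sum_eq_single_of_mem (k : ℤ) k.2 (fun b _ hb => by simp [hb])]
        simp⟩
    have hint := integral_exp_I_mul_eq_sinc ((k : ℤ) : ℝ)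
    rw [Complex.ofReal_intCast] at hint
    rw [← Finset.sum_coe_sort, hint] at h
    calc _ = ∑ j : Finset.Icc (-(N:ℤ)) (N:ℤ),
          (w j : ℂ) * Complex.exp (Complex.I * ((k : ℤ) : ℂ) * x j) := by
          refine Finset.sum_congr rfl fun j _ => ?_
          rw [hUdef, ← Complex.exp_add, mul_comm, hxδ j]
          congr 2
          simp only [htdef]
          push_cast
          ring
      _ = _ := by
          rw [h]
          split_ifs with hk
          · simp [hk]
          · have hk' : π * ((k : ℤ) : ℝ) ≠ 0 := mul_ne_zero pi_ne_zero (by exact_mod_cast hk)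
            rw [sinc_of_ne_zero hk', mul_comm π, sin_int_mul_pi]
            simp
  have hdecomp : WithLp.toLp 2 (fun k => ∑ j, U k j * u j) =
      WithLp.toLp 2 (fun k : Finset.Icc (-(N:ℤ)) (N:ℤ) => if (k : ℤ) = 0 then 2 * (π : ℂ) else 0) +
      (WithLp.toLp 2 (fun k => ∑ j, U k j * (1 - (cos (δ j * t k) : ℂ)) * u j) +
      WithLp.toLp 2 (fun k => ∑ j, U k j * -(Complex.I * (sin (δ j * t k) : ℂ)) * u j)) := by
    ext k
    simp only [PiLp.add_apply]
    rw [← hexact k, ← Finset.sum_add_distrib, ← Finset.sum_add_distrib]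
    refine Finset.sum_congr rfl fun j _ => ?_
    rw [Complex.exp_mul_I]
    push_cast
    ring
  have hnorm_e : ‖WithLp.toLp 2 (fun k : Finset.Icc (-(N:ℤ)) (N:ℤ) =>
      if (k : ℤ) = 0 then 2 * (π : ℂ) else 0)‖ = 2 * π := by
    rw [EuclideanSpace.norm_eq, Finset.sum_eq_single_of_mem
      (⟨0, by simp⟩ : Finset.Icc (-(N:ℤ)) (N:ℤ)) (Finset.mem_univ _)]
    · simp [abs_of_pos pi_pos, Real.sqrt_sq, pi_pos.le]
    · intro b _ hb
      have : (b : ℤ) ≠ 0 := fun h => hb (Subtype.ext h)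
      simp [this]
  have hmain : R * ‖WithLp.toLp 2 u‖ * (cos (π * α) - sin (π * α)) ≤ 2 * π := by
    have h1 : R * ‖WithLp.toLp 2 u‖ ≤ 2 * π + (R * (1 - cos (π * α)) * ‖WithLp.toLp 2 u‖ +
        R * sin (π * α) * ‖WithLp.toLp 2 u‖) := by
      rw [← norm_equispaced_dft N u, hdecomp, ← hnorm_e]
      refine (norm_add_le _ _).trans ?_
      gcongr
      exact (norm_add_le _ _).trans (add_le_add hcos hsin)
    linarith
  have hpos : 0 < cos (π * α) - sin (π * α) := by
    rw [sub_pos, ← cos_pi_div_two_sub]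
    exact cos_lt_cos_of_nonneg_of_le_pi (by positivity) (by nlinarith [pi_pos])
      (by nlinarith [pi_pos])
  rw [le_div_iff₀ hpos]
  refine le_trans ?_ hmain
  gcongr
  rw [← Finset.sum_coe_sort, hR, EuclideanSpace.norm_eq, ← Real.sqrt_mul hMpos.le]
  apply Real.le_sqrt_of_sq_le
  refine sq_sum_le_card_mul_sum_sq.trans_eq ?_
  rw [Finset.card_univ, Fintype.card_coe, Int.card_Icc,
    show ((N : ℤ) + 1 - -(N : ℤ)).toNat = 2 * N + 1 by omega]
  simp [hudef]
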